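/- For every n ≥ 2 and every integer d ≥ 1 there exists a polynomial p ∈ 𝓗 in n variables of degree d with N(p) = (n − 1)·d + 1. (In particular, for n ≥ 3 the bound (n − 1)·d ≤ N(p) − 1 is sharp for every degree.) -/

import Mathlib

/-!
With `s = ∑ i, xᵢ`, the polynomial comes from expanding a pure power by `s` repeatedly: start from `s` and,
with `t = x₀`, replace the monomial `t ^ k` by `t ^ k * s` for `k = 1, …, d - 1`. The result is
`t ^ d + ∑ k < d, t ^ k * ∑ i ≠ 0, xᵢ`.
All its coefficients are `0` or `1`, its `(n - 1) * d + 1` exponents are pairwise distinct, and on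
`s = 1` it equals `t ^ d + (1 - t) * ∑ k < d, t ^ k = 1` by the geometric sum.
-/

open MvPolynomial

/-- `𝓗`: polynomials with nonnegative coefficients that are `1`
on the hyperplane `x₁ + ⋯ + xₙ = 1`. -/
def InH (n : ℕ) (p : MvPolynomial (Fin n) ℝ) : Prop :=
  (∀ α : Fin n →₀ ℕ, 0 ≤ p.coeff α) ∧
  ∀ x : Fin n → ℝ, (∑ i, x i) = 1 → eval x p = 1

/-- `N(p)`: the number of monomials of `p` with nonzero coefficient. -/
def Nmon {n : ℕ} (p : MvPolynomial (Fin n) ℝ) : ℕ := p.support.card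

/-- The exponent of the monomial `xᵢ₊₁ * x₀ ^ k`, indexed by the pair `(i, k)`. -/
noncomputable def mixedExp (m : ℕ) (q : Fin m × ℕ) : Fin (m + 1) →₀ ℕ :=
  Finsupp.single q.1.succ 1 + Finsupp.single 0 q.2

lemma mixedExp_injective (m : ℕ) : Function.Injective (mixedExp m) := by
  rintro ⟨i, k⟩ ⟨j, l⟩ h
  have h0 := DFunLike.congr_fun h 0
  have h1 := DFunLike.congr_fun h i.succ
  simp [mixedExp, Finsupp.single_apply] at h0 h1
  simp [h0, h1]

open Classical in
/-- The exponents of `x₀ ^ d + ∑ k < d, ∑ i, xᵢ₊₁ * x₀ ^ k`. -/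
noncomputable def sharpExps (m d : ℕ) : Finset (Fin (m + 1) →₀ ℕ) :=
  insert (Finsupp.single 0 d) ((Finset.univ ×ˢ Finset.range d).image (mixedExp m))

lemma single_notMem_image (m d : ℕ) [DecidableEq (Fin (m + 1) →₀ ℕ)] :
    (Finsupp.single 0 d : Fin (m + 1) →₀ ℕ) ∉
      (Finset.univ ×ˢ Finset.range d).image (mixedExp m) := by
  rw [Finset.mem_image]
  rintro ⟨⟨i, k⟩, -, h⟩
  have h1 := DFunLike.congr_fun h i.succ
  simp [mixedExp] at h1

lemma card_sharpExps (m d : ℕ) : (sharpExps m d).card = m * d + 1 := by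
  classical
  rw [sharpExps, Finset.card_insert_of_notMem (single_notMem_image m d),
    Finset.card_image_of_injective _ (mixedExp_injective m)]
  simp

/-- The polynomial `x₀ ^ d + ∑ k < d, ∑ i, xᵢ₊₁ * x₀ ^ k`. -/
noncomputable def sharpPoly (m d : ℕ) : MvPolynomial (Fin (m + 1)) ℝ :=
  ∑ α ∈ sharpExps m d, monomial α 1

open Classical in
lemma coeff_sharpPoly (m d : ℕ) (α : Fin (m + 1) →₀ ℕ) :
    (sharpPoly m d).coeff α = if α ∈ sharpExps m d then 1 else 0 := by
  simp [sharpPoly, coeff_sum, coeff_monomial]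

lemma support_sharpPoly (m d : ℕ) : (sharpPoly m d).support = sharpExps m d := by
  ext α
  simp [mem_support_iff, coeff_sharpPoly]

lemma eval_sharpPoly (m d : ℕ) (x : Fin (m + 1) → ℝ) :
    eval x (sharpPoly m d) =
      x 0 ^ d + (∑ i : Fin m, x i.succ) * ∑ k ∈ Finset.range d, x 0 ^ k := by
  classical
  have hmixed (q : Fin m × ℕ) :
      eval x (monomial (mixedExp m q) (1 : ℝ)) = x q.1.succ * x 0 ^ q.2 := by
    rw [eval_monomial, mixedExp, Finsupp.prod_add_index' (by simp) (by simp [pow_add])]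
    simp
  rw [sharpPoly, sharpExps, Finset.sum_insert (single_notMem_image m d),
    Finset.sum_image (mixedExp_injective m).injOn, map_add, map_sum, Finset.sum_mul_sum,
    ← Finset.sum_product']
  simp only [hmixed]
  simp [eval_monomial]

lemma totalDegree_sharpPoly (m d : ℕ) : (sharpPoly m d).totalDegree = d := by
  classical
  apply le_antisymm
  · rw [totalDegree, support_sharpPoly]
    refine Finset.sup_le fun α hα => ?_
    simp only [sharpExps, Finset.mem_insert, Finset.mem_image] at hα
    rcases hα with rfl | ⟨⟨i, k⟩, hq, rfl⟩
    · simp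
    · have hk : k < d := by simpa using hq
      rw [mixedExp, Finsupp.sum_add_index' (by simp) (by simp)]
      simp
      omega
  · have h : (Finsupp.single 0 d : Fin (m + 1) →₀ ℕ) ∈ (sharpPoly m d).support := by
      simp [support_sharpPoly, sharpExps]
    simpa using le_totalDegree h

/-- for every `n ≥ 2` and every `d ≥ 1` there is `p ∈ 𝓗` in `n`
variables of degree `d` with `N(p) = (n−1)·d + 1`. -/
theorem stmt2 (n : ℕ) (hn : 2 ≤ n) (d : ℕ) (hd : 1 ≤ d) :
    ∃ p : MvPolynomial (Fin n) ℝ,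
      InH n p ∧ p.totalDegree = d ∧ Nmon p = (n - 1) * d + 1 := by
  obtain ⟨m, rfl⟩ : ∃ m, n = m + 1 := ⟨n - 1, by omega⟩
  refine ⟨sharpPoly m d, ⟨fun α => ?_, fun x hx => ?_⟩, totalDegree_sharpPoly m d, ?_⟩
  · classical
    rw [coeff_sharpPoly]
    split_ifs <;> simp
  · rw [Fin.sum_univ_succ] at hx
    rw [eval_sharpPoly, show ∑ i : Fin m, x i.succ = 1 - x 0 by linarith, mul_neg_geom_sum]
    ring
  · rw [Nmon, support_sharpPoly, card_sharpExps, Nat.add_sub_cancel]
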